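/- Two-dimensional horizontal surgery estimate: Let ω be a locally finite positive Borel measure on ℝ², let J and R be squares with ρ-comparable side lengths such that J ⊂ 3R, and let λ ∈ (0,1/2). Let ℋ_λ be the set of horizontal translations γ of step λℓ(J) with |γ| ≤ Cℓ(R). Then (1/#ℋ_λ) Σ_{γ ∈ ℋ_λ} ∫_{(J+γ)_λ^{left}} |Δ_{J+γ}^ω 1_R|² dω ≤ C_ρ √λ ω(R), where (J+γ)_λ^{left} is the vertical face of width λℓ(J) of the lower-left corner (J+γ)_− ∖ (J+γ)_λ, and C_ρ depends only on ρ. -/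

import Mathlib

open MeasureTheory Set Filter Topology
open scoped ENNReal NNReal Classical

noncomputable section

/-- Euclidean space `ℝⁿ`. -/
abbrev Pt (n : ℕ) : Type := EuclideanSpace ℝ (Fin n)

/-- An axis-parallel half-open cube in `ℝⁿ`, given by its corner `c` and positive
side length `l`. -/
structure Cube (n : ℕ) : Type where
  c : Pt n
  l : ℝ
  lpos : 0 < l

namespace Cube

variable {n : ℕ}

/-- The underlying (half-open) set of the cube. -/
def set (Q : Cube n) : Set (Pt n) := {x | ∀ i, Q.c i ≤ x i ∧ x i < Q.c i + Q.l}

/-- The center of the cube. -/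
def center (Q : Cube n) : Pt n := WithLp.toLp 2 fun i => Q.c i + Q.l / 2

/-- The concentric triple `3Q`. -/
def tri (Q : Cube n) : Cube n := ⟨WithLp.toLp 2 fun i => Q.c i - Q.l, 3 * Q.l, by have := Q.lpos; linarith⟩

/-- The dyadic child of a cube indexed by `e : Fin n → Bool`. -/
def child (Q : Cube n) (e : Fin n → Bool) : Cube n :=
  ⟨WithLp.toLp 2 fun i => Q.c i + (if e i then Q.l / 2 else 0), Q.l / 2, by have := Q.lpos; linarith⟩

/-- The translate `Q + γ` of a cube. -/
def trans (Q : Cube n) (γ : Pt n) : Cube n := ⟨WithLp.toLp 2 fun i => Q.c i + γ i, Q.l, Q.lpos⟩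

/-- The `λ`-interior `Q_λ = {x ∈ Q : dist(x,∂Q) > λ ℓ(Q)}` of a cube. -/
def inn (Q : Cube n) (lam : ℝ) : Set (Pt n) :=
  {x ∈ Q.set | lam * Q.l < Metric.infDist x (frontier Q.set)}

end Cube

/-- The distance between two sets, as an extended nonnegative real. -/
def sDistE {n : ℕ} (s t : Set (Pt n)) : ℝ≥0∞ := ⨅ (x ∈ s) (y ∈ t), edist x y

/-- Side lengths comparable within a factor `Cc` : `1/Cc ≤ ℓ(Q)/ℓ(Q') ≤ Cc`. -/
def sideComp {n : ℕ} (Cc : ℝ) (Q Q' : Cube n) : Prop := Q.l ≤ Cc * Q'.l ∧ Q'.l ≤ Cc * Q.l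

/-- Two cubes touch if their closures intersect, and the intersection is contained in
the boundary of the larger cube. -/
def Touching {n : ℕ} (Q R : Cube n) : Prop :=
  (closure Q.set ∩ closure R.set).Nonempty ∧
  (Q.l ≤ R.l → closure Q.set ∩ closure R.set ⊆ frontier R.set) ∧
  (R.l ≤ Q.l → closure Q.set ∩ closure R.set ⊆ frontier Q.set)

/-- The indicator function of a set. -/
def indic {n : ℕ} (s : Set (Pt n)) : Pt n → ℝ := s.indicator 1

/-- A standard `α`-fractional Calderón–Zygmund kernel in `ℝⁿ`: size and smoothness of
order `1 + δ`, for the kernel and its adjoint. -/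
structure CZKernel (n : ℕ) (α : ℝ) : Type where
  K : Pt n → Pt n → ℝ
  C₀ : ℝ
  Cpos : 0 < C₀
  δ : ℝ
  δpos : 0 < δ
  size : ∀ x y : Pt n, x ≠ y → |K x y| ≤ C₀ * ‖x - y‖ ^ (α - n)
  gradSize : ∀ x y : Pt n, x ≠ y →
    ‖fderiv ℝ (fun z => K z y) x‖ ≤ C₀ * ‖x - y‖ ^ (α - n - 1)
  gradHolder : ∀ x x' y : Pt n, x ≠ y → ‖x - x'‖ ≤ ‖x - y‖ / 2 →
    ‖fderiv ℝ (fun z => K z y) x - fderiv ℝ (fun z => K z y) x'‖ ≤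
      C₀ * (‖x - x'‖ / ‖x - y‖) ^ δ * ‖x - y‖ ^ (α - n - 1)
  gradSizeAdj : ∀ x y : Pt n, x ≠ y →
    ‖fderiv ℝ (fun z => K x z) y‖ ≤ C₀ * ‖x - y‖ ^ (α - n - 1)
  gradHolderAdj : ∀ x y y' : Pt n, x ≠ y → ‖y - y'‖ ≤ ‖x - y‖ / 2 →
    ‖fderiv ℝ (fun z => K x z) y - fderiv ℝ (fun z => K x z) y'‖ ≤
      C₀ * (‖y - y'‖ / ‖x - y‖) ^ δ * ‖x - y‖ ^ (α - n - 1)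

/-- A (tangent line type) truncation of a CZ kernel: a bounded kernel, vanishing on the
diagonal, compactly supported, agreeing with `K` in the annulus `d ≤ |x-y| ≤ r`. -/
structure Truncation {n : ℕ} {α : ℝ} (K : CZKernel n α) : Type where
  Kt : Pt n → Pt n → ℝ
  d : ℝ
  r : ℝ
  dpos : 0 < d
  dlt : d < r
  bounded : ∃ M, ∀ x y, |Kt x y| ≤ M
  diag : ∀ x, Kt x x = 0
  agrees : ∀ x y : Pt n, d ≤ ‖x - y‖ → ‖x - y‖ ≤ r → Kt x y = K.K x y
  compactsupp : ∃ S, ∀ x y : Pt n, S ≤ ‖x - y‖ → Kt x y = 0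

/-- The truncated operator `T^α_μ f (x) = ∫ K_t(x,y) f(y) dμ(y)`. -/
def Truncation.op {n : ℕ} {α : ℝ} {K : CZKernel n α} (τ : Truncation K)
    (μ : Measure (Pt n)) (f : Pt n → ℝ) (x : Pt n) : ℝ := ∫ y, τ.Kt x y * f y ∂μ

/-- The truncated dual operator `(T^α)^*_μ g (x) = ∫ K_t(y,x) g(y) dμ(y)`. -/
def Truncation.opAdj {n : ℕ} {α : ℝ} {K : CZKernel n α} (τ : Truncation K)
    (μ : Measure (Pt n)) (g : Pt n → ℝ) (x : Pt n) : ℝ := ∫ y, τ.Kt y x * g y ∂μ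

/-- The two-weight norm constant `𝔑_{T^α}(σ,ω)`, uniform over all truncations. -/
def normConst {n : ℕ} {α : ℝ} (K : CZKernel n α) (σ ω : Measure (Pt n)) : ℝ≥0∞ :=
  sInf {N : ℝ≥0∞ | ∀ τ : Truncation K, ∀ f : Pt n → ℝ,
    ∫⁻ x, ENNReal.ofReal ((τ.op σ f x) ^ 2) ∂ω ≤ N ^ 2 * ∫⁻ x, ENNReal.ofReal ((f x) ^ 2) ∂σ}

/-- The (quasi)cube `Ω Q` associated to a cube `Q` and a globally biLipschitz map `Ω`;
for ordinary cubes take `Ω = id`. -/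
def qset {n : ℕ} (Om : Pt n → Pt n) (Q : Cube n) : Set (Pt n) := Om '' Q.set

/-- The (quasi)cube testing constant `𝔗_{T^α}(σ,ω)`, uniform over all truncations. -/
def testConst {n : ℕ} {α : ℝ} (Om : Pt n → Pt n) (K : CZKernel n α)
    (σ ω : Measure (Pt n)) : ℝ≥0∞ :=
  sInf {T : ℝ≥0∞ | ∀ τ : Truncation K, ∀ Q : Cube n,
    ∫⁻ x in qset Om Q, ENNReal.ofReal ((τ.op σ (indic (qset Om Q)) x) ^ 2) ∂ω ≤
      T ^ 2 * σ (qset Om Q)}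

/-- The dual (quasi)cube testing constant `𝔗^*_{T^α}(σ,ω)`. -/
def testConstDual {n : ℕ} {α : ℝ} (Om : Pt n → Pt n) (K : CZKernel n α)
    (σ ω : Measure (Pt n)) : ℝ≥0∞ :=
  sInf {T : ℝ≥0∞ | ∀ τ : Truncation K, ∀ Q : Cube n,
    ∫⁻ x in qset Om Q, ENNReal.ofReal ((τ.opAdj ω (indic (qset Om Q)) x) ^ 2) ∂σ ≤
      T ^ 2 * ω (qset Om Q)}

/-- The weak boundedness constant `𝒲ℬ𝒫_{T^α}(σ,ω)` with comparability constant `Cc`. -/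
def wbpConst {n : ℕ} {α : ℝ} (K : CZKernel n α) (Cc : ℝ) (σ ω : Measure (Pt n)) : ℝ≥0∞ :=
  sInf {W : ℝ≥0∞ | ∀ τ : Truncation K, ∀ Q Q' : Cube n, sideComp Cc Q Q' →
    (Q.set ⊆ Q'.tri.set \ Q'.set ∨ Q'.set ⊆ Q.tri.set \ Q.set) →
    ENNReal.ofReal |∫ x in Q.set, τ.op σ (indic Q'.set) x ∂ω| ≤
      W * (ω Q.set) ^ (1/2 : ℝ) * (σ Q'.set) ^ (1/2 : ℝ)}

/-- The indicator/touching constant `𝔍_{T^α}(σ,ω)` with comparability constant `Cc`. -/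
def indTouchConst {n : ℕ} {α : ℝ} (K : CZKernel n α) (Cc : ℝ) (σ ω : Measure (Pt n)) : ℝ≥0∞ :=
  sInf {Jc : ℝ≥0∞ | ∀ τ : Truncation K, ∀ Q Q' : Cube n, Touching Q Q' → sideComp Cc Q Q' →
    (Q.set ⊆ Q'.tri.set \ Q'.set ∨ Q'.set ⊆ Q.tri.set \ Q.set) →
    ENNReal.ofReal |∫ x in Q'.set, τ.op σ (indic Q.set) x ∂ω| ≤
      Jc * (σ Q.set) ^ (1/2 : ℝ) * (ω Q'.set) ^ (1/2 : ℝ)}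

/-- The reproducing Poisson integral `𝒫^α(ΩQ, μ)`. -/
def repPoisson {n : ℕ} (α : ℝ) (Om : Pt n → Pt n) (Q : Cube n) (μ : Measure (Pt n)) : ℝ≥0∞ :=
  ∫⁻ x, ENNReal.ofReal ((Q.l / (Q.l + ‖x - Om Q.center‖) ^ 2) ^ ((n : ℝ) - α)) ∂μ

/-- The standard Poisson integral `P^α(ΩQ, μ)`. -/
def stdPoisson {n : ℕ} (α : ℝ) (Om : Pt n → Pt n) (Q : Cube n) (μ : Measure (Pt n)) : ℝ≥0∞ :=
  ∫⁻ x, ENNReal.ofReal (Q.l / (Q.l + ‖x - Om Q.center‖) ^ ((n : ℝ) + 1 - α)) ∂μ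

/-- The one-tailed Muckenhoupt constant `𝒜₂^α(σ,ω)`. -/
def a2tail {n : ℕ} (α : ℝ) (Om : Pt n → Pt n) (σ ω : Measure (Pt n)) : ℝ≥0∞ :=
  ⨆ Q : Cube n, repPoisson α Om Q (σ.restrict (qset Om Q)ᶜ) * ω (qset Om Q) /
    ENNReal.ofReal (Q.l ^ ((n : ℝ) - α))

/-- The set of common point masses of `σ` and `ω`. -/
def commonAtoms {n : ℕ} (σ ω : Measure (Pt n)) : Set (Pt n) := {p | 0 < σ {p} ∧ 0 < ω {p}}

/-- The punctured mass `ω(Q, 𝔓_{(σ,ω)})`. -/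
def punctMass {n : ℕ} (σ ω : Measure (Pt n)) (Om : Pt n → Pt n) (Q : Cube n) : ℝ≥0∞ :=
  ω (qset Om Q) - ⨆ p ∈ qset Om Q ∩ commonAtoms σ ω, ω {p}

/-- The punctured Muckenhoupt constant `A₂^{α,punct}(σ,ω)`. -/
def a2punct {n : ℕ} (α : ℝ) (Om : Pt n → Pt n) (σ ω : Measure (Pt n)) : ℝ≥0∞ :=
  ⨆ Q : Cube n, (punctMass σ ω Om Q / ENNReal.ofReal (Q.l ^ ((n : ℝ) - α))) *
    (σ (qset Om Q) / ENNReal.ofReal (Q.l ^ ((n : ℝ) - α)))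

/-- The full Muckenhoupt constant `𝔄₂^α = 𝒜₂^α + 𝒜₂^{α,*} + A₂^{α,punct} + A₂^{α,*,punct}`. -/
def muckA2 {n : ℕ} (α : ℝ) (Om : Pt n → Pt n) (σ ω : Measure (Pt n)) : ℝ≥0∞ :=
  a2tail α Om σ ω + a2tail α Om ω σ + a2punct α Om σ ω + a2punct α Om ω σ

/-- The dyadic cube of the grid translated by `t`, of scale `k` and position `m`. -/
def dCube {n : ℕ} (t : Pt n) (k : ℤ) (m : Fin n → ℤ) : Cube n :=
  ⟨WithLp.toLp 2 fun i => t i + (2:ℝ) ^ k * m i, (2:ℝ) ^ k, by positivity⟩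

/-- The dyadic grid with origin `t`. -/
def gridCubes {n : ℕ} (t : Pt n) : Set (Cube n) := {Q | ∃ k m, Q = dCube t k m}

/-- Alternate dyadic cubes: unions of `2ⁿ` grid cubes of half the side length. -/
def altCubes {n : ℕ} (t : Pt n) : Set (Cube n) :=
  {Q | ∃ (k : ℤ) (m : Fin n → ℤ), Q.l = (2:ℝ) ^ k ∧ ∀ i, Q.c i = t i + (2:ℝ) ^ (k - 1) * m i}

/-- The `μ`-average of `f` over `s`. -/
def cubeAvg {n : ℕ} (μ : Measure (Pt n)) (s : Set (Pt n)) (f : Pt n → ℝ) : ℝ :=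
  (∫ x in s, f x ∂μ) / (μ s).toReal

/-- The martingale (Haar) difference `Δ_Q^μ f`. -/
def haarDiff {n : ℕ} (μ : Measure (Pt n)) (Q : Cube n) (f : Pt n → ℝ) (x : Pt n) : ℝ :=
  ∑ e : Fin n → Bool,
    Set.indicator (Q.child e).set (fun _ => cubeAvg μ (Q.child e).set f - cubeAvg μ Q.set f) x

/-- `J` is `(r,ε)`-deeply embedded in `K`. -/
def deepEmb {n : ℕ} (r : ℕ) (ε : ℝ) (J K : Cube n) : Prop :=
  J.set ⊆ K.set ∧ (2:ℝ) ^ r * J.l ≤ K.l ∧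
    ENNReal.ofReal (J.l ^ ε * K.l ^ (1 - ε) / 2) ≤ sDistE J.set (frontier K.set)

/-- The maximal `(r,ε)`-deeply embedded dyadic subcubes of `K` from the grid `t`. -/
def maxDeep {n : ℕ} (r : ℕ) (ε : ℝ) (t : Pt n) (K : Cube n) : Set (Cube n) :=
  {J | J ∈ gridCubes t ∧ deepEmb r ε J K ∧
    ∀ J' ∈ gridCubes t, J.set ⊆ J'.set → deepEmb r ε J' K → J' = J}

/-- The grid children of a (possibly alternate) cube `K`. -/
def gridChildren {n : ℕ} (t : Pt n) (K : Cube n) : Set (Cube n) :=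
  {K' | K' ∈ gridCubes t ∧ K'.l = K.l / 2 ∧ K'.set ⊆ K.set}

/-- `P = π^ℓ K'` is the `ℓ`-fold grid ancestor of `K'`. -/
def gridAncestor {n : ℕ} (t : Pt n) (lev : ℕ) (K' P : Cube n) : Prop :=
  P ∈ gridCubes t ∧ P.l = (2:ℝ) ^ lev * K'.l ∧ K'.set ⊆ P.set

/-- The refinement `M^ℓ_{(r,ε)-deep,𝒟}(K)` of the maximal deeply embedded collection. -/
def maxDeepRef {n : ℕ} (r : ℕ) (ε : ℝ) (t : Pt n) (lev : ℕ) (K : Cube n) : Set (Cube n) :=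
  {J | (∃ K' ∈ gridChildren t K, ∃ P : Cube n, gridAncestor t lev K' P ∧ J ∈ maxDeep r ε t P) ∧
       ∃ L ∈ maxDeep r ε t K, J.set ⊆ L.set}

/-- The `ω`-average (barycenter) of the identity over the quasicube `Ω J`. -/
def cubeAvgVec {n : ℕ} (Om : Pt n → Pt n) (ω : Measure (Pt n)) (J : Cube n) : Pt n :=
  ((ω (qset Om J)).toReal)⁻¹ • ∫ x in qset Om J, x ∂ω

/-- The energy `‖P^ω_{ΩJ} x‖²_{L²(ω)} = ∫_{ΩJ} |x - E_{ΩJ}^ω x|² dω`. -/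
def energyTerm {n : ℕ} (Om : Pt n → Pt n) (ω : Measure (Pt n)) (J : Cube n) : ℝ≥0∞ :=
  ∫⁻ x in qset Om J, ENNReal.ofReal (‖x - cubeAvgVec Om ω J‖ ^ 2) ∂ω

/-- The energy sum `Σ_{J ∈ 𝒥} (P^α(J, 1_I σ)/ℓ(J))² ‖P_J^ω x‖²`. -/
def energySum {n : ℕ} (α : ℝ) (Om : Pt n → Pt n) (σ ω : Measure (Pt n)) (I : Cube n)
    (𝒥 : Set (Cube n)) : ℝ≥0∞ :=
  ∑' J : 𝒥, (stdPoisson α Om (J : Cube n) (σ.restrict (qset Om I)) /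
      ENNReal.ofReal ((J : Cube n).l)) ^ 2 * energyTerm Om ω (J : Cube n)

/-- `Ir` is a partition of `I` into dyadic subcubes from the grid `t`. -/
def isGridPartition {n : ℕ} (t : Pt n) (I : Cube n) (Ir : ℕ → Cube n) : Prop :=
  (∀ k, Ir k ∈ gridCubes t) ∧ (∀ k, (Ir k).set ⊆ I.set) ∧
  (∀ k k', k ≠ k' → Disjoint (Ir k).set (Ir k').set) ∧ (⋃ k, (Ir k).set) = I.set

/-- The strong energy constant `ℰ_α^{strong}(σ,ω)` with goodness parameters `r, ε`. -/
def strongEnergy {n : ℕ} (r : ℕ) (ε α : ℝ) (Om : Pt n → Pt n) (σ ω : Measure (Pt n)) : ℝ≥0∞ :=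
  sInf {E : ℝ≥0∞ |
    (∀ (t : Pt n) (I : Cube n), I ∈ gridCubes t → ∀ Ir : ℕ → Cube n, isGridPartition t I Ir →
      (∑' k : ℕ, energySum α Om σ ω I (maxDeep r ε t (Ir k))) ≤ E ^ 2 * σ (qset Om I)) ∧
    (∀ (t : Pt n) (I : Cube n), I ∈ altCubes t → ∀ lev : ℕ,
      energySum α Om σ ω I (maxDeepRef r ε t lev I) ≤ E ^ 2 * σ (qset Om I))}

/-- The translation `γ` of step `2^{-M}` indexed by `idx`. -/
def gamOf {n : ℕ} (M : ℕ) {Kc : ℕ} (idx : Fin n → Fin Kc) : Pt n :=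
  WithLp.toLp 2 fun i => (idx i : ℝ) * (2:ℝ) ^ (-(M : ℤ))

/-- The truncated dyadic grid built on `𝔻_M`, of size `2^{-N}`, translated by `γ`. -/
def truncGrid {n : ℕ} (M : ℕ) (N : ℤ) (γ : Pt n) : Set (Cube n) :=
  {Q | ∃ (k : ℤ) (m : Fin n → ℤ), -(M : ℤ) ≤ k ∧ k ≤ -N ∧ Q = dCube γ k m}

/-- The siblings of `Q`: the `3ⁿ` triadic children of `3Q`. -/
def siblings {n : ℕ} (Q : Cube n) : Set (Cube n) :=
  {Q' | ∃ a : Fin n → Fin 3, Q'.l = Q.l ∧ ∀ i, Q'.c i = Q.c i + ((a i : ℝ) - 1) * Q.l}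

/-- A grid `𝒟` is `Q`-good for the goodness parameters `r, ε`. -/
def QGoodGrid {n : ℕ} (r : ℕ) (ε : ℝ) (Q : Cube n) (𝒟 : Set (Cube n)) : Prop :=
  ∀ Q' ∈ siblings Q, ∀ I ∈ 𝒟, (2:ℝ) ^ r * Q.l ≤ I.l →
    ENNReal.ofReal (Q'.l ^ ε * I.l ^ (1 - ε) / 2) ≤ sDistE Q'.set (frontier I.set)

/-- A cube `I` is `r`-good in the grid `𝒟`. -/
def rGoodIn {n : ℕ} (r : ℕ) (ε : ℝ) (I : Cube n) (𝒟 : Set (Cube n)) : Prop :=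
  ∀ K ∈ 𝒟, (2:ℝ) ^ r * I.l ≤ K.l →
    ENNReal.ofReal (I.l ^ ε * K.l ^ (1 - ε) / 2) ≤ sDistE I.set (frontier K.set)

/-- The good projection `P^μ_{Q;good} f` relative to the grid `𝒟`. -/
def projGood {n : ℕ} (r : ℕ) (ε : ℝ) (Q : Cube n) (𝒟 : Set (Cube n)) (μ : Measure (Pt n))
    (f : Pt n → ℝ) (x : Pt n) : ℝ :=
  if QGoodGrid r ε Q 𝒟 then
    ∑' I : {I : Cube n // I ∈ 𝒟 ∧ rGoodIn r ε I 𝒟}, haarDiff μ (I : Cube n) f x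
  else 0

/-- The bad projection `P^μ_{Q;bad} f = f - P^μ_{Q;good} f`. -/
def projBad {n : ℕ} (r : ℕ) (ε : ℝ) (Q : Cube n) (𝒟 : Set (Cube n)) (μ : Measure (Pt n))
    (f : Pt n → ℝ) (x : Pt n) : ℝ := f x - projGood r ε Q 𝒟 μ f x

/-- An 'appropriate' function: supported in a cube `L` with mean zero, with `−N > ℓ(L) + r`,
and constant on the tiles of `𝔻_M`. -/
def Appropriate {n : ℕ} (μ : Measure (Pt n)) (M : ℕ) (N : ℤ) (r : ℕ) (f : Pt n → ℝ) : Prop :=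
  ∃ L : Cube n, (∀ x, x ∉ L.set → f x = 0) ∧ (∫ x in L.set, f x ∂μ) = 0 ∧
    L.l + (r : ℝ) < (-N : ℝ) ∧
    ∀ m : Fin n → ℤ, ∀ x ∈ (dCube 0 (-(M : ℤ)) m).set, ∀ y ∈ (dCube 0 (-(M : ℤ)) m).set, f x = f y

/-- Pairs `(I,J)` of grid cubes with `J ⊂ 3I` and `ρ`-comparable side lengths. -/
def pairsNear {n : ℕ} (t : Pt n) (ρ : ℕ) : Set (Cube n × Cube n) :=
  {p | p.1 ∈ gridCubes t ∧ p.2 ∈ gridCubes t ∧ p.2.set ⊆ p.1.tri.set ∧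
       (2:ℝ) ^ (-(ρ:ℤ)) * p.1.l ≤ p.2.l ∧ p.2.l ≤ (2:ℝ) ^ (ρ:ℤ) * p.1.l}

/-- Pairs `(I,J)` of grid cubes with `I ⊂ 3J` and `ρ`-comparable side lengths. -/
def pairsNear' {n : ℕ} (t : Pt n) (ρ : ℕ) : Set (Cube n × Cube n) :=
  {p | p.1 ∈ gridCubes t ∧ p.2 ∈ gridCubes t ∧ p.1.set ⊆ p.2.tri.set ∧
       (2:ℝ) ^ (-(ρ:ℤ)) * p.1.l ≤ p.2.l ∧ p.2.l ≤ (2:ℝ) ^ (ρ:ℤ) * p.1.l}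

/-- The inner product `⟨T^α_σ Δ_I^σ f, Δ_J^ω g⟩_ω`. -/
def innerTT {n : ℕ} {α : ℝ} {K : CZKernel n α} (τ : Truncation K) (σ ω : Measure (Pt n))
    (I J : Cube n) (f g : Pt n → ℝ) : ℝ :=
  ∫ x, τ.op σ (haarDiff σ I f) x * haarDiff ω J g x ∂ω

/-- The form `A₁(f,g)`, summing over comparable nearby pairs with `J ⊂ 3I`. -/
def formA1 {n : ℕ} {α : ℝ} {K : CZKernel n α} (τ : Truncation K) (σ ω : Measure (Pt n))
    (t : Pt n) (ρ : ℕ) (f g : Pt n → ℝ) : ℝ :=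
  ∑' p : pairsNear t ρ, innerTT τ σ ω p.1.1 p.1.2 f g

/-- The form `A₂(f,g)`, summing over comparable nearby pairs with `I ⊂ 3J`. -/
def formA2 {n : ℕ} {α : ℝ} {K : CZKernel n α} (τ : Truncation K) (σ ω : Measure (Pt n))
    (t : Pt n) (ρ : ℕ) (f g : Pt n → ℝ) : ℝ :=
  ∑' p : pairsNear' t ρ, innerTT τ σ ω p.1.1 p.1.2 f g

/-- `I` and `J` are `r`-close in the grid `t`: comparable side lengths, touching,
and one contained in the triple of the other. -/
def rClosePairs {n : ℕ} (t : Pt n) (r : ℕ) : Set (Cube n × Cube n) :=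
  {p | p.1 ∈ gridCubes t ∧ p.2 ∈ gridCubes t ∧
       (2:ℝ) ^ (-(r:ℤ)) * p.1.l ≤ p.2.l ∧ p.2.l ≤ (2:ℝ) ^ (r:ℤ) * p.1.l ∧
       Touching p.1 p.2 ∧ (p.1.set ⊆ p.2.tri.set ∨ p.2.set ⊆ p.1.tri.set)}

/-- The bilinear form `ℬ(f,g) = ⟨T_σ^α f, g⟩_ω`. -/
def formB {n : ℕ} {α : ℝ} {K : CZKernel n α} (τ : Truncation K) (σ ω : Measure (Pt n))
    (f g : Pt n → ℝ) : ℝ := ∫ x, τ.op σ f x * g x ∂ω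

/-- The bilinear form `𝒞_𝒟(f,g)`, summing over `r`-close pairs in the grid. -/
def formC {n : ℕ} {α : ℝ} {K : CZKernel n α} (τ : Truncation K) (σ ω : Measure (Pt n))
    (t : Pt n) (r : ℕ) (f g : Pt n → ℝ) : ℝ :=
  ∑' p : rClosePairs t r, innerTT τ σ ω p.1.1 p.1.2 f g

/-- The subbilinear form `𝒮_𝒟(f,g)`, summing absolute values over `r`-close pairs. -/
def formS {n : ℕ} {α : ℝ} {K : CZKernel n α} (τ : Truncation K) (σ ω : Measure (Pt n))
    (t : Pt n) (r : ℕ) (f g : Pt n → ℝ) : ℝ≥0∞ :=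
  ∑' p : rClosePairs t r, ENNReal.ofReal |innerTT τ σ ω p.1.1 p.1.2 f g|

/-- Two cubes are `ρ`-close: `ρ`-comparable side lengths, in a common grid, touching, and
one contained in the triple of the other. -/
def rhoClose {n : ℕ} (ρ : ℕ) (Q R : Cube n) : Prop :=
  (2:ℝ) ^ (-(ρ:ℤ)) * Q.l ≤ R.l ∧ R.l ≤ (2:ℝ) ^ (ρ:ℤ) * Q.l ∧
  (∃ t : Pt n, Q ∈ gridCubes t ∧ R ∈ gridCubes t) ∧
  Touching Q R ∧ (Q.set ⊆ R.tri.set ∨ R.set ⊆ Q.tri.set)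

/-- The left vertical face of width `λℓ(K)` of the lower-left corner `K_- ∖ K_λ` of a
square `K` in the plane. -/
def leftFace (K : Cube 2) (lam : ℝ) : Set (Pt 2) :=
  ((K.child fun _ => false).set \ K.inn lam) ∩ {x | x 0 ≤ K.c 0 + lam * K.l}

/-- The horizontal translation by `k` steps of size `s` in the plane. -/
def horizTrans (k : ℤ) (s : ℝ) : Pt 2 := WithLp.toLp 2 fun i => if i = 0 then (k : ℝ) * s else 0

lemma Cube.measurableSet_set {n : ℕ} (Q : Cube n) : MeasurableSet Q.set := by
  have h : Q.set = ⋂ i, {x : Pt n | Q.c i ≤ x i ∧ x i < Q.c i + Q.l} := by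
    ext x; simp [Cube.set]
  rw [h]
  have hm : ∀ i, Measurable fun x : Pt n => x i := fun i => by fun_prop
  exact MeasurableSet.iInter fun i => (measurableSet_le measurable_const (hm i)).inter
    (measurableSet_lt (hm i) measurable_const)

lemma Cube.isBounded_set {n : ℕ} (Q : Cube n) : Bornology.IsBounded Q.set := by
  have h : Q.set ⊆ (EuclideanSpace.equiv (Fin n) ℝ) ⁻¹'
      (Set.Icc (fun i => Q.c i) (fun i => Q.c i + Q.l)) := by
    intro x hx
    exact ⟨fun i => (hx i).1, fun i => (hx i).2.le⟩
  refine IsCompact.isBounded ?_ |>.subset h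
  exact (EuclideanSpace.equiv (Fin n) ℝ).toHomeomorph.isCompact_preimage.2 isCompact_Icc

lemma Cube.measure_ne_top {n : ℕ} (ω : Measure (Pt n)) [IsLocallyFiniteMeasure ω] (Q : Cube n) :
    ω Q.set ≠ ∞ :=
  Q.isBounded_set.measure_lt_top.ne

lemma Cube.child_subset {n : ℕ} (Q : Cube n) (e : Fin n → Bool) : (Q.child e).set ⊆ Q.set := by
  intro x hx i
  have h := hx i
  have hl := Q.lpos
  simp only [Cube.child] at h
  split_ifs at h <;> constructor <;> linarith [h.1, h.2]

lemma Cube.eq_of_mem_child {n : ℕ} {Q : Cube n} {e e' : Fin n → Bool} {x : Pt n}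
    (h : x ∈ (Q.child e).set) (h' : x ∈ (Q.child e').set) : e = e' := by
  funext i
  have h := h i
  have h' := h' i
  simp only [Cube.child] at h h'
  cases he : e i <;> cases he' : e' i <;> simp [he, he'] at h h' ⊢ <;> linarith

lemma haarDiff_of_mem_child {n : ℕ} (μ : Measure (Pt n)) (Q : Cube n) (f : Pt n → ℝ)
    {e : Fin n → Bool} {x : Pt n} (hx : x ∈ (Q.child e).set) :
    haarDiff μ Q f x = cubeAvg μ (Q.child e).set f - cubeAvg μ Q.set f := by
  unfold haarDiff
  rw [Finset.sum_eq_single e]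
  · rw [Set.indicator_of_mem hx]
  · intro e' _ hne
    exact Set.indicator_of_notMem (fun h => hne (Cube.eq_of_mem_child h hx)) _
  · simp

lemma cubeAvg_indic {n : ℕ} (μ : Measure (Pt n)) (s : Set (Pt n)) {r : Set (Pt n)}
    (hr : MeasurableSet r) : cubeAvg μ s (indic r) = μ.real (r ∩ s) / μ.real s := by
  unfold cubeAvg indic
  rw [integral_indicator_one hr, measureReal_restrict_apply hr]
  rfl

lemma abs_cubeAvg_sub_le_one {n : ℕ} {μ : Measure (Pt n)} {s t r : Set (Pt n)}
    (hr : MeasurableSet r) (hs : μ s ≠ ∞) (ht : μ t ≠ ∞) :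
    |cubeAvg μ s (indic r) - cubeAvg μ t (indic r)| ≤ 1 := by
  rw [cubeAvg_indic μ s hr, cubeAvg_indic μ t hr]
  have h1 : μ.real (r ∩ s) / μ.real s ≤ 1 :=
    div_le_one_of_le₀ (measureReal_mono inter_subset_right hs) measureReal_nonneg
  have h2 : μ.real (r ∩ t) / μ.real t ≤ 1 :=
    div_le_one_of_le₀ (measureReal_mono inter_subset_right ht) measureReal_nonneg
  have h3 : 0 ≤ μ.real (r ∩ s) / μ.real s := by positivity
  have h4 : 0 ≤ μ.real (r ∩ t) / μ.real t := by positivity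
  rw [abs_le]; constructor <;> linarith

lemma abs_cubeAvg_sub_mul_le {n : ℕ} {μ : Measure (Pt n)} {s t r : Set (Pt n)}
    (hr : MeasurableSet r) (hst : s ⊆ t) (ht : μ t ≠ ∞) (hr' : μ r ≠ ∞) :
    |cubeAvg μ s (indic r) - cubeAvg μ t (indic r)| * μ.real s ≤ μ.real r := by
  rw [cubeAvg_indic μ s hr, cubeAvg_indic μ t hr]
  have hle : μ.real s ≤ μ.real t := measureReal_mono hst ht
  have hs0 : 0 ≤ μ.real s := measureReal_nonneg
  have key : ∀ u : Set (Pt n), μ.real (r ∩ u) / μ.real u * μ.real u ≤ μ.real r := fun u => by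
    rcases eq_or_ne (μ.real u) 0 with h | h
    · simp [h]
    · rw [div_mul_cancel₀ _ h]
      exact measureReal_mono inter_subset_left hr'
  have h1 := key s
  have h2 := (mul_le_mul_of_nonneg_left hle
    (show 0 ≤ μ.real (r ∩ t) / μ.real t by positivity)).trans (key t)
  have h3 : 0 ≤ μ.real (r ∩ s) / μ.real s * μ.real s := by positivity
  have h4 : 0 ≤ μ.real (r ∩ t) / μ.real t * μ.real s := by positivity
  rw [← abs_of_nonneg hs0, ← abs_mul, abs_of_nonneg hs0, abs_le, sub_mul]
  constructor <;> linarith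

/-- An increasing function of `s ≥ 0`, bounded by `4A`, whose derivative dominates
`min (1, A/s)²`. -/
def potential (A s : ℝ) : ℝ := 4 * A * s / (A + s)

lemma potential_nonneg {A s : ℝ} (hA : 0 ≤ A) (hs : 0 ≤ s) : 0 ≤ potential A s := by
  unfold potential; positivity

lemma potential_le {A s : ℝ} (hA : 0 ≤ A) (hs : 0 ≤ s) : potential A s ≤ 4 * A := by
  unfold potential
  exact div_le_of_le_mul₀ (by positivity) (by positivity) (by nlinarith [mul_nonneg hA hA])

lemma sq_mul_sub_le_potential_sub {d A s t : ℝ} (hA : 0 ≤ A) (hs : 0 ≤ s) (hst : s ≤ t)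
    (hd : |d| ≤ 1) (hdt : |d| * t ≤ A) :
    d ^ 2 * (t - s) ≤ potential A t - potential A s := by
  unfold potential
  rcases hA.eq_or_lt with rfl | hA
  · have : |d| * t = 0 := le_antisymm hdt (mul_nonneg (abs_nonneg _) (hs.trans hst))
    have h0 : d ^ 2 * t = 0 := by rw [← sq_abs, pow_two, mul_assoc, this, mul_zero]
    have : 0 ≤ d ^ 2 * s := by positivity
    simp only [mul_zero, zero_mul, zero_div, sub_zero]
    linarith [mul_sub (d ^ 2) t s]
  · have ht : 0 ≤ t := hs.trans hst
    have hst' : 0 ≤ t - s := by linarith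
    have h1 : |d| * (A + t) ≤ 2 * A := by nlinarith
    have h2 : d ^ 2 * (A + t) ^ 2 ≤ 4 * A ^ 2 := by
      have := pow_le_pow_left₀ (by positivity) h1 2
      rw [mul_pow, sq_abs] at this
      linarith
    have h3 : d ^ 2 * ((A + t) * (A + s)) ≤ 4 * A ^ 2 := by
      refine le_trans ?_ h2
      rw [pow_two (A + t)]
      gcongr
    have h4 : 4 * A * t / (A + t) - 4 * A * s / (A + s)
        = 4 * A ^ 2 * (t - s) / ((A + t) * (A + s)) := by
      field_simp; ring
    rw [h4, le_div_iff₀ (by positivity)]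
    nlinarith

lemma sum_range_sub_add_two (u : ℕ → ℝ) (m : ℕ) :
    ∑ j ∈ Finset.range m, (u j - u (j + 2)) = u 0 + u 1 - u m - u (m + 1) := by
  induction m with
  | zero => simp
  | succ m ih => rw [Finset.sum_range_succ, ih]; ring

lemma sum_range_mul_le {g : ℤ → ℝ≥0∞} {m : ℕ} {M : ℝ≥0∞}
    (h : ∀ k : ℤ, ∑ j ∈ Finset.range m, g (k + j) ≤ M) (N : ℕ) (k : ℤ) :
    ∑ j ∈ Finset.range (N * m), g (k + j) ≤ N * M := by
  induction N with
  | zero => simp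
  | succ N ih =>
    rw [Nat.succ_mul, Finset.sum_range_add, Nat.cast_succ, add_mul, one_mul]
    refine add_le_add ih ?_
    simpa [add_assoc] using h (k + (N * m : ℕ))

/-- The half-open rectangle `[a, b) × [y, y + h)`. -/
def rect (a b y h : ℝ) : Set (Pt 2) := {x | a ≤ x 0 ∧ x 0 < b ∧ y ≤ x 1 ∧ x 1 < y + h}

lemma measurableSet_rect (a b y h : ℝ) : MeasurableSet (rect a b y h) := by
  have hm : ∀ i, Measurable fun x : Pt 2 => x i := fun i => by fun_prop
  exact (measurableSet_le measurable_const (hm 0)).inter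
    ((measurableSet_lt (hm 0) measurable_const).inter
    ((measurableSet_le measurable_const (hm 1)).inter
    (measurableSet_lt (hm 1) measurable_const)))

lemma measure_rect_ne_top (ω : Measure (Pt 2)) [IsLocallyFiniteMeasure ω] (a b y h : ℝ) :
    ω (rect a b y h) ≠ ∞ := by
  refine measure_ne_top_of_subset ?_ (Cube.measure_ne_top ω
    ⟨WithLp.toLp 2 ![a, y], |b - a| + |h| + 1, by positivity⟩)
  rintro x ⟨h1, h2, h3, h4⟩ i
  have := le_abs_self (b - a)
  have := le_abs_self h
  have := abs_nonneg (b - a)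
  have := abs_nonneg h
  fin_cases i <;> constructor <;> simp <;> linarith

lemma setLIntegral_haarDiff_leftFace_le (ω : Measure (Pt 2)) [IsLocallyFiniteMeasure ω]
    (K R : Cube 2) {lam a b : ℝ} (hlam : 0 < lam) (ha : K.c 0 + lam * K.l < a) (hb : b ≤ K.c 0 + K.l / 2)
    (hab : K.c 0 + lam * K.l < b) :
    ∫⁻ x in leftFace K lam, ENNReal.ofReal ((haarDiff ω K (indic R.set) x) ^ 2) ∂ω ≤
      ENNReal.ofReal (potential (ω.real R.set) (ω.real (rect (K.c 0) b (K.c 1) (K.l / 2))) -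
        potential (ω.real R.set) (ω.real (rect a b (K.c 1) (K.l / 2)))) := by
  set T := rect (K.c 0) b (K.c 1) (K.l / 2) with hT
  set T' := rect a b (K.c 1) (K.l / 2) with hT'
  set L := K.child fun _ => false with hL
  set d := cubeAvg ω L.set (indic R.set) - cubeAvg ω K.set (indic R.set) with hd
  have hKl := K.lpos
  have hTL : T ⊆ L.set := by
    rintro x ⟨h1, h2, h3, h4⟩ i
    fin_cases i
    · exact ⟨by simpa [hL, Cube.child] using h1, by
        simp only [hL, Cube.child]; simp; linarith⟩
    · exact ⟨by simpa [hL, Cube.child] using h3, by simpa [hL, Cube.child] using h4⟩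
  have hT'T : T' ⊆ T := by
    rintro x ⟨h1, h2, h3, h4⟩
    refine ⟨?_, h2, h3, h4⟩
    have := mul_pos hlam hKl
    linarith
  have hface : leftFace K lam ⊆ T \ T' := by
    rintro x ⟨⟨hx, -⟩, hx0 : x 0 ≤ _⟩
    have h0 := hx 0
    have h1 := hx 1
    simp only [Cube.child] at h0 h1
    simp at h0 h1
    refine ⟨⟨h0.1, by linarith, h1.1, h1.2⟩, fun h => ?_⟩
    linarith [h.1]
  have hTtop : ω T ≠ ∞ := measure_rect_ne_top ω _ _ _ _
  have hdT : |d| * ω.real T ≤ ω.real R.set :=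
    (mul_le_mul_of_nonneg_left (measureReal_mono hTL (L.measure_ne_top ω)) (abs_nonneg d)).trans
      (abs_cubeAvg_sub_mul_le R.measurableSet_set (K.child_subset _) (K.measure_ne_top ω)
        (R.measure_ne_top ω))
  have hd1 : |d| ≤ 1 := abs_cubeAvg_sub_le_one R.measurableSet_set (L.measure_ne_top ω)
    (K.measure_ne_top ω)
  calc ∫⁻ x in leftFace K lam, ENNReal.ofReal ((haarDiff ω K (indic R.set) x) ^ 2) ∂ω
      ≤ ∫⁻ x in T \ T', ENNReal.ofReal ((haarDiff ω K (indic R.set) x) ^ 2) ∂ω :=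
        lintegral_mono_set hface
    _ = ∫⁻ _ in T \ T', ENNReal.ofReal (d ^ 2) ∂ω := by
        refine setLIntegral_congr_fun
          ((measurableSet_rect _ _ _ _).diff (measurableSet_rect _ _ _ _)) fun x hx => ?_
        simp only [haarDiff_of_mem_child ω K (indic R.set) (hTL hx.1)]
        rfl
    _ = ENNReal.ofReal (d ^ 2 * (ω.real T - ω.real T')) := by
        rw [setLIntegral_const, ENNReal.ofReal_mul (sq_nonneg d),
          ← measureReal_sdiff hT'T (measurableSet_rect _ _ _ _) hTtop,
          ofReal_measureReal (measure_ne_top_of_subset sdiff_subset hTtop)]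
    _ ≤ _ := by
        exact ENNReal.ofReal_le_ofReal (sq_mul_sub_le_potential_sub measureReal_nonneg
          measureReal_nonneg (measureReal_mono hT'T hTtop) hd1 hdT)

lemma sum_leftFace_block_le (ω : Measure (Pt 2)) [IsLocallyFiniteMeasure ω] (J R : Cube 2)
    {lam : ℝ} (hlam : 0 < lam) {m : ℕ} (hm : m * lam < 1 / 2) (k : ℤ) :
    ∑ j ∈ Finset.range m,
      ∫⁻ x in leftFace (J.trans (horizTrans (k + j) (lam * J.l))) lam,
        ENNReal.ofReal
          ((haarDiff ω (J.trans (horizTrans (k + j) (lam * J.l))) (indic R.set) x) ^ 2) ∂ω ≤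
      ENNReal.ofReal (8 * ω.real R.set) := by
  have hJ := J.lpos
  have hs : 0 < lam * J.l := mul_pos hlam hJ
  set b : ℝ := J.c 0 + k * (lam * J.l) + J.l / 2 with hb
  set A := ω.real R.set with hA
  have hA0 : 0 ≤ A := measureReal_nonneg
  set u : ℕ → ℝ := fun j => potential A
    (ω.real (rect (J.c 0 + (k + j) * (lam * J.l)) b (J.c 1) (J.l / 2))) with hu
  have hu0 : ∀ j, 0 ≤ u j := fun j => potential_nonneg hA0 measureReal_nonneg
  have hu4 : ∀ j, u j ≤ 4 * A := fun j => potential_le hA0 measureReal_nonneg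
  have hrect : ∀ j : ℕ, rect (J.c 0 + (k + (j + 2 : ℕ)) * (lam * J.l)) b (J.c 1) (J.l / 2) ⊆
      rect (J.c 0 + (k + j) * (lam * J.l)) b (J.c 1) (J.l / 2) := by
    rintro j x ⟨h1, h2, h3, h4⟩
    refine ⟨?_, h2, h3, h4⟩
    push_cast at h1
    nlinarith
  calc _ ≤ ∑ j ∈ Finset.range m, ENNReal.ofReal (u j - u (j + 2)) := by
        refine Finset.sum_le_sum fun j hj => ?_
        have hjm : (j : ℝ) + 1 ≤ m := by exact_mod_cast Finset.mem_range.1 hj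
        have hj' : ((j : ℝ) + 1) * (lam * J.l) < J.l / 2 := by
          have : ((j : ℝ) + 1) * lam < 1 / 2 :=
            (mul_le_mul_of_nonneg_right hjm hlam.le).trans_lt hm
          nlinarith
        have hj0 : 0 ≤ (j : ℝ) * (lam * J.l) := by positivity
        have h := setLIntegral_haarDiff_leftFace_le ω
          (J.trans (horizTrans (k + j) (lam * J.l))) R (lam := lam)
          (a := J.c 0 + (k + (j + 2 : ℕ)) * (lam * J.l)) (b := b) hlam
          (by simp [Cube.trans, horizTrans]; nlinarith)
          (by simp [Cube.trans, horizTrans, hb]; nlinarith)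
          (by simp [Cube.trans, horizTrans, hb]; nlinarith)
        simpa [Cube.trans, horizTrans, hu] using h
    _ = ENNReal.ofReal (∑ j ∈ Finset.range m, (u j - u (j + 2))) := by
        refine (ENNReal.ofReal_sum_of_nonneg fun j _ => ?_).symm
        have := sq_mul_sub_le_potential_sub (d := 0) hA0 measureReal_nonneg
          (measureReal_mono (hrect j) (measure_rect_ne_top ω _ _ _ _)) (by simp) (by simpa)
        simpa [hu] using this
    _ ≤ ENNReal.ofReal (8 * A) := by
        refine ENNReal.ofReal_le_ofReal ?_
        rw [sum_range_sub_add_two]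
        linarith [hu0 m, hu0 (m + 1), hu4 0, hu4 1]

/-- **Two-dimensional horizontal surgery estimate.** For squares `J ⊂ 3R` in the plane with
`ρ`-comparable side lengths and `λ ∈ (0,1/2)`, averaging over the set `ℋ_λ` of horizontal
translations of step `λℓ(J)` with `|γ| ≤ Cℓ(R)`,
`(1/#ℋ_λ) Σ_{γ ∈ ℋ_λ} ∫_{(J+γ)_λ^{left}} |Δ_{J+γ}^ω 1_R|² dω ≤ C_ρ √λ ω(R)`,
where `(J+γ)_λ^{left}` is the vertical face of width `λℓ(J)` of the lower-left corner,
and `C_ρ` depends only on `ρ`. -/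
theorem twoDimHorizontalSurgery (ρ : ℕ) :
    ∃ C : ℝ, 0 < C ∧
      ∀ ω : Measure (Pt 2), IsLocallyFiniteMeasure ω →
      ∀ J R : Cube 2, (2:ℝ) ^ (-(ρ:ℤ)) * J.l ≤ R.l → R.l ≤ (2:ℝ) ^ (ρ:ℤ) * J.l →
      J.set ⊆ R.tri.set →
      ∀ lam : ℝ, 0 < lam → lam < 1/2 →
      ∀ Lam : ℕ, 0 < Lam → R.l ≤ (Lam : ℝ) * (lam * J.l) →
      (Lam : ℝ) * (lam * J.l) ≤ (2:ℝ) ^ (ρ:ℤ) * R.l →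
      (∑ k ∈ Finset.Icc (-(Lam : ℤ)) (Lam : ℤ),
            ∫⁻ x in leftFace (J.trans (horizTrans k (lam * J.l))) lam,
              ENNReal.ofReal
                ((haarDiff ω (J.trans (horizTrans k (lam * J.l))) (indic R.set) x) ^ 2) ∂ω) /
          ((Finset.Icc (-(Lam : ℤ)) (Lam : ℤ)).card : ℝ≥0∞)
        ≤ ENNReal.ofReal (C * Real.sqrt lam) * ω R.set := by
  have h2ρ : (0:ℝ) < (2:ℝ) ^ (ρ:ℤ) := by positivity
  refine ⟨8 * (4 + (2:ℝ) ^ (ρ:ℤ)), by positivity, ?_⟩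
  intro ω hω J R hJR _ _ lam hlam hlam2 Lam hLam hRL _
  set g : ℤ → ℝ≥0∞ := fun k => ∫⁻ x in leftFace (J.trans (horizTrans k (lam * J.l))) lam,
    ENNReal.ofReal
      ((haarDiff ω (J.trans (horizTrans k (lam * J.l))) (indic R.set) x) ^ 2) ∂ω with hg
  set A := ω.real R.set with hA
  have hA0 : 0 ≤ A := measureReal_nonneg
  have hLam' : (0:ℝ) < Lam := by exact_mod_cast hLam
  obtain ⟨m, hm1, hm2, hm3⟩ : ∃ m : ℕ, 0 < m ∧ m * lam < 1 / 2 ∧ 1 ≤ 4 * (m * lam) := by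
    have hx : 1 < 1 / (2 * lam) := by rw [lt_div_iff₀ (by positivity)]; linarith
    have h1 := Nat.le_ceil (1 / (2 * lam))
    have h2 := Nat.ceil_lt_add_one (show 0 ≤ 1 / (2 * lam) by positivity)
    have h3 : 1 < ⌈1 / (2 * lam)⌉₊ := by exact_mod_cast hx.trans_le h1
    obtain ⟨m, hm⟩ : ∃ m : ℕ, ⌈1 / (2 * lam)⌉₊ = m + 1 := ⟨_, (Nat.sub_add_cancel h3.le).symm⟩
    have hm0 : 0 < m := by omega
    have hm0' : (1:ℝ) ≤ m := by exact_mod_cast hm0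
    rw [hm] at h1 h2
    push_cast at h1 h2
    rw [div_le_iff₀ (by positivity)] at h1
    have h2' : (m:ℝ) < 1 / (2 * lam) := by linarith
    rw [lt_div_iff₀ (by positivity)] at h2'
    exact ⟨m, hm0, by linarith, by nlinarith⟩
  have hm0 : (0:ℝ) < m := by exact_mod_cast hm1
  set N := (2 * Lam + 1) / m + 1 with hN
  have hNm : 2 * Lam + 1 ≤ N * m := by
    rw [hN, mul_comm _ m]
    exact (Nat.lt_mul_div_succ _ hm1).le
  have hNle : (N:ℝ) ≤ (4 + (2:ℝ) ^ (ρ:ℤ)) * lam * (2 * Lam + 1) := by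
    have h1 : (((2 * Lam + 1) / m : ℕ) : ℝ) ≤ (2 * Lam + 1) / m := by
      exact_mod_cast (Nat.cast_div_le : (((2 * Lam + 1) / m : ℕ) : ℝ) ≤ _)
    have h2 : (2 * (Lam:ℝ) + 1) / m ≤ 4 * lam * (2 * Lam + 1) := by
      rw [div_le_iff₀ hm0]
      nlinarith
    have h3 : 1 ≤ (2:ℝ) ^ (ρ:ℤ) * lam * (2 * Lam + 1) := by
      have h4 : J.l ≤ (2:ℝ) ^ (ρ:ℤ) * (Lam * (lam * J.l)) := by
        rw [zpow_neg] at hJR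
        refine le_trans ?_ (mul_le_mul_of_nonneg_left (hJR.trans hRL) h2ρ.le)
        rw [mul_inv_cancel_left₀ h2ρ.ne']
      have h5 : 1 ≤ (2:ℝ) ^ (ρ:ℤ) * lam * Lam := by
        refine le_of_mul_le_mul_right ?_ J.lpos
        linarith
      nlinarith [mul_pos h2ρ hlam]
    rw [hN]
    push_cast
    linarith
  have hsum : ∑ k ∈ Finset.Icc (-(Lam : ℤ)) (Lam : ℤ), g k ≤ N * ENNReal.ofReal (8 * A) := by
    have hIcc : Finset.Icc (-(Lam : ℤ)) (Lam : ℤ) ⊆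
        (Finset.range (N * m)).image fun j : ℕ => -(Lam : ℤ) + j := by
      intro k hk
      rw [Finset.mem_Icc] at hk
      rw [Finset.mem_image]
      exact ⟨(k + Lam).toNat, Finset.mem_range.2 (by omega), by omega⟩
    refine (Finset.sum_le_sum_of_subset hIcc).trans ?_
    rw [Finset.sum_image fun a _ b _ h => by simpa using h]
    exact sum_range_mul_le (fun k => sum_leftFace_block_le ω J R hlam hm2 k) N _
  have hcard : ((Finset.Icc (-(Lam : ℤ)) (Lam : ℤ)).card : ℝ≥0∞) =
      ENNReal.ofReal (2 * Lam + 1) := by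
    rw [Int.card_Icc, show ((Lam : ℤ) + 1 - -(Lam : ℤ)).toNat = 2 * Lam + 1 by omega,
      ← ENNReal.ofReal_natCast]
    push_cast
    rfl
  have hsqrt : lam ≤ Real.sqrt lam := Real.le_sqrt_of_sq_le (by nlinarith)
  rw [hcard]
  refine ENNReal.div_le_of_le_mul (hsum.trans ?_)
  rw [← ofReal_measureReal (R.measure_ne_top ω), ← ENNReal.ofReal_natCast,
    ← ENNReal.ofReal_mul (by positivity), ← ENNReal.ofReal_mul (by positivity),
    ← ENNReal.ofReal_mul (by positivity)]
  refine ENNReal.ofReal_le_ofReal ?_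
  calc (N:ℝ) * (8 * A) ≤ (4 + (2:ℝ) ^ (ρ:ℤ)) * lam * (2 * Lam + 1) * (8 * A) := by gcongr
    _ ≤ (4 + (2:ℝ) ^ (ρ:ℤ)) * Real.sqrt lam * (2 * Lam + 1) * (8 * A) := by gcongr
    _ = _ := by ring
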